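/- arXiv:math/9902109 — 2 statements merged into one kernel-verified Lean document; each statement's English description precedes it below -/
import Mathlib

section
/- Mixed products of vertex operators and dual vertex operators on the vacuum are signed Schur functions of juxtaposed tuples: for partitions μ = (μ₁,…,μ_l) and ν = (ν₁,…,ν_k), S_{−μ₁} ⋯ S_{−μ_l} S*_{ν₁} ⋯ S*_{ν_k}(1) = (−1)^{|ν|} s_{(μ,ν')} and S*_{μ₁} ⋯ S*_{μ_l} S_{−ν₁} ⋯ S_{−ν_k}(1) = (−1)^{|μ|} s_{(μ,ν')'}, where (μ,ν') denotes the juxtaposed integer tuple (μ₁,…,μ_l,ν'₁,…,ν'_{ν₁}) with ν' the conjugate partition of ν. -/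
/-!
By Taylor's formula the right factor of a vertex operator is a translation `p_n ↦ p_n - c_n z⁻ⁿ`
of `Λ`, a ring homomorphism, so it can be computed entrywise on a Jacobi–Trudi determinant. On a
determinant in the operator's own family, the component of index `n` prepends the entry `n`. On a
determinant of length `n` in the dual family, it adds `1` to every entry, that is, it puts a part
`n` in front of the conjugate partition. Hence the inner product builds `ν'` from the vacuum, and
the outer product prepends `μ`.
-/

open MvPolynomial

noncomputable section

/-- The ring of symmetric functions `Λ = ℚ[p₁,p₂,…]`, with the variable `X n`
(for `n : ℕ+`) playing the role of the power sum `p_n`. -/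
abbrev Lam : Type := MvPolynomial ℕ+ ℚ

/-- The power sum `p_n`. -/
def pp (n : ℕ+) : Lam := X n

/-- The family `g` with generating function `∑_k g_k t^k = exp (∑_{n≥1} c n · p_n tⁿ / n)`,
characterized by `g 0 = 1` together with the recursion obtained by differentiating the
generating function:  `(k+1) · g (k+1) = ∑_{i=0}^{k} c (i+1) · p_{i+1} · g (k-i)`. -/
def genFam (c : ℕ → ℚ) : ℕ → Lam
  | 0 => 1
  | (k+1) => (((k : ℚ) + 1)⁻¹) •
      ∑ i ∈ Finset.range (k+1), c (i+1) • (pp ⟨i+1, Nat.succ_pos i⟩ * genFam c (k - i))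
  decreasing_by exact Nat.lt_succ_of_le (Nat.sub_le k i)

/-- The complete homogeneous symmetric function `h_k`,
with generating function `exp (∑ p_n tⁿ/n)`. -/
def hh : ℕ → Lam := genFam fun _ => 1

/-- The elementary symmetric function `e_k`,
with generating function `exp (∑ (−1)^{n−1} p_n tⁿ/n)`. -/
def ee : ℕ → Lam := genFam fun n => (-1)^(n+1)

/-- `h` indexed by `ℤ` (zero for negative indices). -/
def hZ (n : ℤ) : Lam := if 0 ≤ n then hh n.toNat else 0

/-- `e` indexed by `ℤ` (zero for negative indices). -/
def eZ (n : ℤ) : Lam := if 0 ≤ n then ee n.toNat else 0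

/-- The differential operator `∏_i (i·∂/∂p_i)^(α i)` (the factors commute,
so the sorted product is the canonical one). -/
def monOp (α : ℕ+ →₀ ℕ) : Module.End ℚ Lam :=
  ((α.support.sort (· ≤ ·)).map fun (i : ℕ+) => (((i : ℕ) : ℚ) • (pderiv i).toLinearMap) ^ (α i)).prod

/-- `f(∂) P`: substitute `p_i ↦ i·∂/∂p_i` in `f` and apply the result to `P`. -/
def Dop (f : Lam) (P : Lam) : Lam := ∑ α ∈ f.support, f.coeff α • monOp α P

/-- A bound for the weighted degree (`p_i` of weight `i`) of `P`;
`e_j(∂) P = 0 = h_j(∂) P` whenever `j > wbound P`. -/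
def wbound (P : Lam) : ℕ := P.support.sup fun α => α.sum fun i k => (i : ℕ) * k

/-- The vertex operator component `S_n = ∑_{j ≥ max(0,n)} (−1)^j h_{j−n} · e_j(∂)`;
on a given polynomial only the (finitely many) terms with `j ≤ wbound P` act nontrivially. -/
def Sop (n : ℤ) (P : Lam) : Lam :=
  ∑ j ∈ Finset.range (wbound P + 1),
    if n ≤ (j : ℤ) then ((-1 : ℚ)) ^ j • (hZ ((j : ℤ) - n) * Dop (ee j) P) else 0

/-- The dual vertex operator component `S*_n = ∑_{j ≥ max(0,−n)} (−1)^{j+n} e_{j+n} · h_j(∂)`. -/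
def SstarOp (n : ℤ) (P : Lam) : Lam :=
  ∑ j ∈ Finset.range (wbound P + 1),
    if -n ≤ (j : ℤ) then ((-1 : ℚ)) ^ ((j : ℤ) + n) • (eZ ((j : ℤ) + n) * Dop (hh j) P) else 0

/-- The Schur function of an arbitrary integer tuple, via the Jacobi–Trudi determinant
`s_ρ = det (h_{ρ_i − i + j})`. -/
def schur {l : ℕ} (ρ : Fin l → ℤ) : Lam :=
  (Matrix.of fun i j : Fin l => hZ (ρ i - (i.1 : ℤ) + (j.1 : ℤ))).det

/-- The dual Schur function of an integer tuple, `s_{ρ'} = det (e_{ρ_i − i + j})`. -/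
def schurE {l : ℕ} (ρ : Fin l → ℤ) : Lam :=
  (Matrix.of fun i j : Fin l => eZ (ρ i - (i.1 : ℤ) + (j.1 : ℤ))).det

open scoped PowerSeries Polynomial

/-! ### Power series with a given logarithmic derivative -/

section LogDeriv

variable {R S : Type*} [CommRing R] [CommRing S]

theorem mk_pow_mul_one_sub_C_mul_X (u : R) :
    (PowerSeries.mk fun i => u ^ i) * (1 - PowerSeries.C u * PowerSeries.X) = 1 := by
  simpa [PowerSeries.rescale_mk, PowerSeries.rescale_X] using
    congrArg (PowerSeries.rescale u) (PowerSeries.mk_one_mul_one_sub_eq_one R)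

/-- `F = exp (∫ A)`: the power series `F` has constant term `1` and logarithmic derivative `A`. -/
structure HasLogDeriv (F A : R⟦X⟧) : Prop where
  constantCoeff_eq_one : PowerSeries.constantCoeff F = 1
  derivative_eq : d⁄dX R F = A * F

namespace HasLogDeriv

variable {F G A B : R⟦X⟧}

theorem one : HasLogDeriv (1 : R⟦X⟧) 0 where
  constantCoeff_eq_one := map_one _
  derivative_eq := by simp

theorem mul (hF : HasLogDeriv F A) (hG : HasLogDeriv G B) : HasLogDeriv (F * G) (A + B) where
  constantCoeff_eq_one := by
    rw [map_mul, hF.constantCoeff_eq_one, hG.constantCoeff_eq_one, one_mul]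
  derivative_eq := by
    rw [Derivation.leibniz, hF.derivative_eq, hG.derivative_eq, smul_eq_mul, smul_eq_mul]
    ring

theorem map (hF : HasLogDeriv F A) (f : R →+* S) :
    HasLogDeriv (PowerSeries.map f F) (PowerSeries.map f A) where
  constantCoeff_eq_one := by
    rw [← PowerSeries.coeff_zero_eq_constantCoeff_apply, PowerSeries.coeff_map,
      PowerSeries.coeff_zero_eq_constantCoeff_apply, hF.constantCoeff_eq_one, map_one]
  derivative_eq := by
    rw [← map_mul, ← hF.derivative_eq]
    ext n
    simp [PowerSeries.coeff_derivative]

theorem rescale (hF : HasLogDeriv F A) (a : R) :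
    HasLogDeriv (PowerSeries.rescale a F) (a • PowerSeries.rescale a A) where
  constantCoeff_eq_one := by
    rw [← PowerSeries.coeff_zero_eq_constantCoeff_apply, PowerSeries.coeff_rescale, pow_zero,
      one_mul, PowerSeries.coeff_zero_eq_constantCoeff_apply, hF.constantCoeff_eq_one]
  derivative_eq := by
    rw [smul_mul_assoc, ← map_mul, ← hF.derivative_eq]
    ext n
    simp only [PowerSeries.coeff_derivative, PowerSeries.coeff_rescale, PowerSeries.coeff_smul,
      smul_eq_mul]
    ring

theorem unique [IsAddTorsionFree R] (hF : HasLogDeriv F A) (hG : HasLogDeriv G A) : F = G := by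
  obtain ⟨u, rfl⟩ : IsUnit G := by
    rw [PowerSeries.isUnit_iff_constantCoeff, hG.constantCoeff_eq_one]
    exact isUnit_one
  have hquot : F * ↑u⁻¹ = 1 := by
    refine PowerSeries.derivative.ext ?_ ?_
    · rw [Derivation.leibniz, PowerSeries.derivative_inv, hF.derivative_eq, hG.derivative_eq,
        Derivation.map_one_eq_zero, smul_eq_mul, smul_eq_mul]
      linear_combination (-F * ↑u⁻¹ * A) * u.inv_mul
    · have hu := congrArg PowerSeries.constantCoeff u.inv_mul
      rw [map_mul, hG.constantCoeff_eq_one, mul_one] at hu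
      rw [map_mul, hF.constantCoeff_eq_one, one_mul, hu]
  exact Units.mul_inv_eq_one.1 hquot

theorem one_sub_C_mul_X (u : R) :
    HasLogDeriv (1 - PowerSeries.C u * PowerSeries.X) (-PowerSeries.mk fun i => u ^ (i + 1)) where
  constantCoeff_eq_one := by simp
  derivative_eq := by
    have hmk : (PowerSeries.mk fun i => u ^ (i + 1)) =
        PowerSeries.C u * PowerSeries.mk fun i => u ^ i := by
      ext n
      rw [PowerSeries.coeff_C_mul, PowerSeries.coeff_mk, PowerSeries.coeff_mk, pow_succ']
    rw [hmk, neg_mul, mul_assoc, mk_pow_mul_one_sub_C_mul_X, mul_one, map_sub,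
      Derivation.map_one_eq_zero, zero_sub, Derivation.leibniz, PowerSeries.derivative_C,
      PowerSeries.derivative_X, smul_zero, add_zero, smul_eq_mul, mul_one]

end HasLogDeriv

end LogDeriv

/-! ### The families `genFam c` and their generating series -/

/-- The family `genFam c` indexed by `ℤ`, zero for negative indices; the common form of `hZ` and
`eZ`. -/
def genFamZ (c : ℕ → ℚ) (n : ℤ) : Lam := if 0 ≤ n then genFam c n.toNat else 0

/-- The generating series `exp (∑ c_n p_n tⁿ / n)` of the family `genFam c`. -/
def genSeries (c : ℕ → ℚ) : Lam⟦X⟧ := PowerSeries.mk (genFam c)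

/-- The weights of the dual family; this involution exchanges the families `h` and `e`. -/
def dualWeight (c : ℕ → ℚ) (n : ℕ) : ℚ := (-1) ^ (n + 1) * c n

section Families

variable (c : ℕ → ℚ)

theorem genFam_zero : genFam c 0 = 1 := by rw [genFam]

theorem add_one_smul_genFam_succ (k : ℕ) :
    ((k : ℚ) + 1) • genFam c (k + 1) =
      ∑ i ∈ Finset.range (k + 1), c (i + 1) • (X i.succPNat * genFam c (k - i)) := by
  rw [genFam, smul_smul, mul_inv_cancel₀ (by positivity), one_smul]
  rfl

@[simp]
theorem genFamZ_natCast (n : ℕ) : genFamZ c n = genFam c n := by simp [genFamZ]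

theorem genFamZ_of_neg {n : ℤ} (hn : n < 0) : genFamZ c n = 0 := by simp [genFamZ, hn]

theorem genFamZ_zero : genFamZ c 0 = 1 := by simp [genFamZ, genFam_zero]

theorem coeff_genSeries (n : ℕ) : PowerSeries.coeff n (genSeries c) = genFam c n :=
  PowerSeries.coeff_mk _ _

theorem hasLogDeriv_genSeries :
    HasLogDeriv (genSeries c) (PowerSeries.mk fun i => c (i + 1) • X i.succPNat) where
  constantCoeff_eq_one := by
    rw [← PowerSeries.coeff_zero_eq_constantCoeff_apply, coeff_genSeries, genFam_zero]
  derivative_eq := by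
    ext1 k
    have hk := add_one_smul_genFam_succ c k
    rw [Algebra.smul_def, mul_comm] at hk
    rw [PowerSeries.coeff_derivative, PowerSeries.coeff_mul,
      Finset.Nat.sum_antidiagonal_eq_sum_range_succ_mk]
    simpa [coeff_genSeries] using hk

theorem rescale_neg_one_genSeries_mul_genSeries_dualWeight :
    PowerSeries.rescale (-1) (genSeries c) * genSeries (dualWeight c) = 1 := by
  refine (((hasLogDeriv_genSeries c).rescale (-1)).mul
    (hasLogDeriv_genSeries (dualWeight c))).unique ?_
  convert HasLogDeriv.one
  ext1 i
  simp [dualWeight, pow_succ, MvPolynomial.smul_eq_C_mul, PowerSeries.coeff_rescale, mul_assoc]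

end Families

theorem map_genFamZ_sub_mul_map_genFamZ {c : ℕ → ℚ} {S : Type*} [CommRing S]
    {f g : Lam →+* S} {u : S}
    (h : PowerSeries.map f (genSeries c) * (1 - PowerSeries.C u * PowerSeries.X) =
      PowerSeries.map g (genSeries c)) (m : ℤ) :
    f (genFamZ c m) - u * f (genFamZ c (m - 1)) = g (genFamZ c m) := by
  rcases lt_or_ge m 0 with hm | hm
  · simp [genFamZ_of_neg c hm, genFamZ_of_neg c (show m - 1 < 0 by omega)]
  lift m to ℕ using hm
  cases m with
  | zero => simp [genFamZ_of_neg, genFamZ_zero]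
  | succ n =>
    have hcoeff := congrArg (PowerSeries.coeff (n + 1)) h
    rw [mul_sub, mul_one, mul_left_comm, map_sub, PowerSeries.coeff_C_mul,
      PowerSeries.coeff_succ_mul_X] at hcoeff
    rw [genFamZ_natCast, Nat.cast_succ, add_sub_cancel_right, genFamZ_natCast]
    simpa [coeff_genSeries] using hcoeff

/-! ### The translation homomorphism -/

/-- The translation `p_n ↦ p_n - c_n z⁻ⁿ`, where the variable of the target stands for `z⁻¹`; by
Taylor's formula it is the operator `exp (-∑ c_n z⁻ⁿ ∂/∂p_n)`. -/
def translation (c : ℕ → ℚ) : Lam →ₐ[ℚ] Lam[X] :=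
  aeval fun n : ℕ+ => Polynomial.C (X n) - c n • Polynomial.X ^ (n : ℕ)

section Translation

variable {c : ℕ → ℚ}

theorem translation_X (c : ℕ → ℚ) (n : ℕ+) :
    translation c (X n) = Polynomial.C (X n) - c n • Polynomial.X ^ (n : ℕ) :=
  aeval_X _ n

theorem map_translation_genSeries (hc : ∀ n, c n * c n = 1) :
    PowerSeries.map (translation c : Lam →+* Lam[X]) (genSeries c) =
      PowerSeries.map Polynomial.C (genSeries c) *
        (1 - PowerSeries.C Polynomial.X * PowerSeries.X) := by
  refine ((hasLogDeriv_genSeries c).map _).unique ?_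
  convert ((hasLogDeriv_genSeries c).map Polynomial.C).mul (.one_sub_C_mul_X Polynomial.X) using 1
  ext1 i
  simp [translation_X, smul_smul, hc, Polynomial.smul_C, sub_eq_add_neg]

theorem map_translation_genSeries_dualWeight (hc : ∀ n, c n * c n = 1) :
    PowerSeries.map (translation c : Lam →+* Lam[X]) (genSeries (dualWeight c)) *
        (1 - PowerSeries.C (-Polynomial.X) * PowerSeries.X) =
      PowerSeries.map Polynomial.C (genSeries (dualWeight c)) := by
  have hfactor : PowerSeries.rescale (-1)
      (1 - PowerSeries.C Polynomial.X * PowerSeries.X : Lam[X]⟦X⟧) =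
        1 - PowerSeries.C (-Polynomial.X) * PowerSeries.X := by
    have hC : PowerSeries.rescale (-1) (PowerSeries.C (Polynomial.X : Lam[X])) =
        PowerSeries.C Polynomial.X := by
      ext1 n
      cases n <;> simp [PowerSeries.coeff_rescale, PowerSeries.coeff_C]
    rw [map_sub, map_one, map_mul, hC, PowerSeries.rescale_neg_one_X, map_neg]
    ring
  have hinv (f : Lam →+* Lam[X]) : PowerSeries.rescale (-1) (PowerSeries.map f (genSeries c)) *
      PowerSeries.map f (genSeries (dualWeight c)) = 1 := by
    rw [← map_one f, ← map_neg, PowerSeries.rescale_map, ← map_mul,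
      rescale_neg_one_genSeries_mul_genSeries_dualWeight, map_one]
  have htranslation := hinv (translation c)
  rw [map_translation_genSeries hc, map_mul, hfactor] at htranslation
  linear_combination
    PowerSeries.map Polynomial.C (genSeries (dualWeight c)) * htranslation -
      (1 - PowerSeries.C (-Polynomial.X) * PowerSeries.X) *
        PowerSeries.map (translation c : Lam →+* Lam[X]) (genSeries (dualWeight c)) *
        hinv Polynomial.C

theorem translation_genFamZ (hc : ∀ n, c n * c n = 1) (m : ℤ) :
    translation c (genFamZ c m) =
      Polynomial.C (genFamZ c m) - Polynomial.X * Polynomial.C (genFamZ c (m - 1)) :=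
  (map_genFamZ_sub_mul_map_genFamZ (map_translation_genSeries hc).symm m).symm

theorem translation_genFamZ_dualWeight (hc : ∀ n, c n * c n = 1) (m : ℤ) :
    translation c (genFamZ (dualWeight c) m) =
      Polynomial.C (genFamZ (dualWeight c) m) -
        Polynomial.X * translation c (genFamZ (dualWeight c) (m - 1)) := by
  have h := map_genFamZ_sub_mul_map_genFamZ (map_translation_genSeries_dualWeight hc) m
  simp only [RingHom.coe_coe] at h
  linear_combination h

end Translation

/-! ### Differential operators with constant coefficients -/

/-- The derivation `i ∂/∂p_i`, the adjoint (skewing operator) of multiplication by `p_i`. -/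
def skew (i : ℕ+) : Derivation ℚ Lam Lam := ((i : ℕ) : ℚ) • pderiv i

theorem skew_X (i j : ℕ+) : skew i (X j) = (if i = j then ((i : ℕ) : ℚ) else 0) • 1 := by
  rw [skew, Derivation.smul_apply, pderiv_X, Pi.single_apply]
  split_ifs <;> simp_all

theorem commute_skew (i j : ℕ+) :
    Commute (skew i : Module.End ℚ Lam) (skew j : Module.End ℚ Lam) := by
  have hbracket : ⁅skew i, skew j⁆ = 0 := by
    refine MvPolynomial.derivation_ext fun k => ?_
    rw [Derivation.commutator_apply, skew_X, skew_X]
    split_ifs <;> simp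
  refine LinearMap.ext fun P => ?_
  simpa [Derivation.commutator_apply, sub_eq_zero] using DFunLike.congr_fun hbracket P

theorem pairwise_commute_skew_pow (α : ℕ+ → ℕ) (s : Set ℕ+) :
    s.Pairwise (Function.onFun Commute fun i => (skew i : Module.End ℚ Lam) ^ α i) :=
  fun i _ j _ _ => (commute_skew i j).pow_pow _ _

theorem monOp_eq_noncommProd {α : ℕ+ →₀ ℕ} {s : Finset ℕ+} (hs : α.support ⊆ s) :
    monOp α = s.noncommProd (fun i => (skew i : Module.End ℚ Lam) ^ α i)
      (pairwise_commute_skew_pow α s) := by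
  obtain ⟨t, hdisjoint, rfl⟩ : ∃ t, Disjoint α.support t ∧ s = α.support ∪ t :=
    ⟨s \ α.support, Finset.disjoint_sdiff, (Finset.union_sdiff_of_subset hs).symm⟩
  have hsupport : monOp α = α.support.noncommProd (fun i => (skew i : Module.End ℚ Lam) ^ α i)
      (pairwise_commute_skew_pow α _) :=
    (Finset.noncommProd_toFinset _ _ (pairwise_commute_skew_pow α _)
      (Finset.sort_nodup _ _)).symm.trans
        (Finset.noncommProd_congr (Finset.sort_toFinset _ _) (fun _ _ => rfl) _)
  have ht : t.noncommProd (fun i => (skew i : Module.End ℚ Lam) ^ α i)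
      (pairwise_commute_skew_pow α _) = 1 := by
    rw [Finset.noncommProd_eq_pow_card _ _ _ 1, one_pow]
    intro i hi
    rw [Finsupp.notMem_support_iff.1 (Finset.disjoint_right.1 hdisjoint hi), pow_zero]
  rw [Finset.noncommProd_union_of_disjoint hdisjoint, ← hsupport, ht, mul_one]

theorem monOp_add (α β : ℕ+ →₀ ℕ) : monOp (α + β) = monOp α * monOp β := by
  rw [monOp_eq_noncommProd Finsupp.support_add,
    monOp_eq_noncommProd (Finset.subset_union_left (s₂ := β.support)),
    monOp_eq_noncommProd (Finset.subset_union_right (s₁ := α.support)),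
    ← Finset.noncommProd_mul_distrib _ _ _ _ fun i _ j _ _ => (commute_skew i j).pow_pow _ _]
  exact Finset.noncommProd_congr rfl (fun i _ => pow_add _ _ _) _

theorem monOp_zero : monOp 0 = 1 := by simp [monOp]

theorem monOp_single_one (i : ℕ+) : monOp (.single i 1) = (skew i : Module.End ℚ Lam) := by
  rw [monOp_eq_noncommProd Finsupp.support_single_subset, Finset.noncommProd_singleton,
    Finsupp.single_eq_same, pow_one]

/-- The substitution `p_i ↦ i ∂/∂p_i`, as a homomorphism into the differential operators. -/
def dopHom : Lam →ₐ[ℚ] Module.End ℚ Lam :=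
  AddMonoidAlgebra.lift ℚ (Module.End ℚ Lam) (ℕ+ →₀ ℕ)
    { toFun := fun α => monOp α.toAdd
      map_one' := monOp_zero
      map_mul' := fun α β => monOp_add α.toAdd β.toAdd }

theorem dopHom_apply (f P : Lam) : dopHom f P = Dop f P := by
  rw [dopHom, AddMonoidAlgebra.lift_apply, Finsupp.sum, LinearMap.sum_apply]
  rfl

theorem dopHom_X (i : ℕ+) : dopHom (X i) = (skew i : Module.End ℚ Lam) := by
  rw [← monOp_single_one]
  exact (AddMonoidAlgebra.lift_single _ _ _).trans (one_smul _ _)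

theorem dopHom_mul_X (f : Lam) (i : ℕ+) (P : Lam) :
    dopHom (f * X i) P = dopHom f (skew i P) := by
  rw [map_mul, dopHom_X, Module.End.mul_apply, Derivation.coeFn_coe]

theorem dopHom_apply_mul_X (f P : Lam) (m : ℕ+) :
    dopHom f (P * X m) = dopHom f P * X m + dopHom (skew m f) P := by
  induction f using MvPolynomial.induction_on generalizing P with
  | C a =>
    rw [← MvPolynomial.algebraMap_eq, AlgHom.commutes, Derivation.map_algebraMap, map_zero]
    simp
  | add f g hf hg =>
    simp only [map_add, LinearMap.add_apply, hf, hg]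
    ring
  | mul_X f i hf =>
    rw [dopHom_mul_X, dopHom_mul_X, Derivation.leibniz, Derivation.leibniz, skew_X, skew_X,
      smul_eq_mul, smul_eq_mul, smul_eq_mul, smul_eq_mul, map_add, map_add, mul_comm (X m), hf,
      LinearMap.add_apply, mul_comm (X i), dopHom_mul_X, mul_smul_one, mul_smul_one, map_smul,
      map_smul, LinearMap.smul_apply]
    obtain rfl | him := eq_or_ne i m
    · simp only [if_true]
      ring
    · simp only [if_neg him, if_neg him.symm, zero_smul, zero_add]

theorem intCast_smul_genFamZ (c : ℕ → ℚ) {n : ℤ} {N : ℕ} (hn : n ≤ N) :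
    (n : ℚ) • genFamZ c n =
      ∑ i ∈ Finset.range N, c (i + 1) • (X i.succPNat * genFamZ c (n - (i + 1 : ℕ))) := by
  have hvanish {i : ℕ} (hi : n ≤ i) :
      c (i + 1) • (X i.succPNat * genFamZ c (n - (i + 1 : ℕ))) = 0 := by
    rw [genFamZ_of_neg c (by omega), mul_zero, smul_zero]
  rcases le_or_gt n 0 with hn0 | hn0
  · rw [Finset.sum_eq_zero fun i _ => hvanish (hn0.trans (Int.natCast_nonneg i))]
    obtain rfl | hn0 := hn0.eq_or_lt
    · simp
    · rw [genFamZ_of_neg c hn0, smul_zero]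
  obtain ⟨k, rfl⟩ : ∃ k : ℕ, n = (k + 1 : ℕ) := ⟨n.toNat - 1, by omega⟩
  rw [← Finset.sum_subset (Finset.range_subset_range.2 (Int.ofNat_le.1 hn))
    fun i _ hi => hvanish (by simpa using hi), genFamZ_natCast]
  convert add_one_smul_genFam_succ c k using 1
  · norm_cast
  · refine Finset.sum_congr rfl fun i hi => ?_
    rw [← genFamZ_natCast, Nat.cast_sub (Finset.mem_range_succ_iff.1 hi)]
    push_cast
    ring_nf

theorem skew_genFamZ (c : ℕ → ℚ) (m : ℕ+) (n : ℤ) :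
    skew m (genFamZ c n) = c m • genFamZ c (n - m) := by
  induction hk : n.toNat using Nat.strong_induction_on generalizing n with
  | _ k ih =>
  rcases le_or_gt n 0 with hn | hn
  · rw [genFamZ_of_neg c (n := n - m) (by have := m.pos; omega), smul_zero]
    obtain rfl | hn := hn.eq_or_lt
    · rw [genFamZ_zero, Derivation.map_one_eq_zero]
    · rw [genFamZ_of_neg c hn, map_zero]
  have hN : n ≤ (max k m : ℕ) := by omega
  have hmem : (m : ℕ) - 1 ∈ Finset.range (max k m) := by simp
  have hdelta : ∑ i ∈ Finset.range (max k m), c (i + 1) • (genFamZ c (n - (i + 1 : ℕ)) *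
      skew m (X i.succPNat)) = (m : ℚ) • c m • genFamZ c (n - m) := by
    rw [Finset.sum_eq_single_of_mem _ hmem fun i _ hi => ?_]
    · have hm : (m : ℕ) - 1 + 1 = m := Nat.sub_add_cancel m.pos
      have hm' : ((m : ℕ) - 1).succPNat = m := PNat.eq hm
      rw [hm, hm', skew_X, if_pos rfl, mul_smul_one, smul_comm]
    · rw [skew_X, if_neg, zero_smul, mul_zero, smul_zero]
      rintro rfl
      exact hi rfl
  have hrest : ∑ i ∈ Finset.range (max k m), c (i + 1) • (X i.succPNat *
      skew m (genFamZ c (n - (i + 1 : ℕ)))) = ((n - m : ℤ) : ℚ) • c m • genFamZ c (n - m) := by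
    rw [smul_comm, intCast_smul_genFamZ c (show n - m ≤ (max k m : ℕ) by omega), Finset.smul_sum]
    refine Finset.sum_congr rfl fun i _ => ?_
    rw [ih _ (by omega) _ rfl, mul_smul_comm, smul_comm, sub_right_comm]
  have hn0 : (n : ℚ) ≠ 0 := by exact_mod_cast hn.ne'
  refine smul_right_injective Lam hn0 ?_
  dsimp only
  rw [← Derivation.map_smul, intCast_smul_genFamZ c hN, map_sum]
  simp only [Derivation.map_smul, Derivation.leibniz, smul_eq_mul, smul_add, Finset.sum_add_distrib]
  rw [hrest, hdelta, ← add_smul]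
  push_cast
  ring_nf

theorem dopHom_genFam_succ_one (c : ℕ → ℚ) (j : ℕ) : dopHom (genFam c (j + 1)) 1 = 0 := by
  have hj : ((j : ℚ) + 1) ≠ 0 := by positivity
  refine smul_right_injective Lam hj ?_
  dsimp only
  rw [← LinearMap.smul_apply, ← map_smul, add_one_smul_genFam_succ, map_sum, LinearMap.sum_apply,
    smul_zero]
  refine Finset.sum_eq_zero fun i _ => ?_
  rw [map_smul, LinearMap.smul_apply, mul_comm, dopHom_mul_X, Derivation.map_one_eq_zero,
    map_zero, smul_zero]

theorem coeff_translation (c : ℕ → ℚ) (P : Lam) (j : ℕ) :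
    (translation c P).coeff j = (-1 : ℚ) ^ j • Dop (genFam (dualWeight c) j) P := by
  rw [← dopHom_apply, ← genFamZ_natCast]
  induction P using MvPolynomial.induction_on generalizing j with
  | C a =>
    have hC : (C a : Lam) = a • 1 := by rw [MvPolynomial.smul_eq_C_mul, mul_one]
    rw [hC, map_smul, map_one, map_smul, Polynomial.coeff_smul, genFamZ_natCast]
    cases j with
    | zero => simp [genFam_zero]
    | succ j => simp [dopHom_genFam_succ_one, Polynomial.coeff_one]
  | add P Q hP hQ => simp only [map_add, Polynomial.coeff_add, hP, hQ, smul_add]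
  | mul_X P m hP =>
    rw [map_mul, translation_X, mul_sub, Polynomial.coeff_sub, Polynomial.coeff_mul_C, hP,
      mul_smul_comm, Polynomial.coeff_smul, Polynomial.coeff_mul_X_pow', dopHom_apply_mul_X,
      skew_genFamZ]
    split_ifs with hm
    · obtain ⟨d, rfl⟩ := Nat.exists_eq_add_of_le' hm
      have hsign : (-1 : ℚ) ^ (d + (m : ℕ)) * dualWeight c m = -(c m * (-1) ^ d) := by
        have hsq : (-1 : ℚ) ^ (m : ℕ) * (-1) ^ (m : ℕ) = 1 := by rw [← mul_pow]; norm_num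
        rw [dualWeight]
        linear_combination (-(-1) ^ d * c m) * hsq
      rw [hP, Nat.add_sub_cancel, Nat.cast_add, add_sub_cancel_right, map_smul,
        LinearMap.smul_apply, smul_add, smul_smul, smul_smul, hsign, neg_smul, smul_mul_assoc,
        sub_eq_add_neg]
    · rw [genFamZ_of_neg _ (n := (j : ℤ) - m) (by omega)]
      simp

theorem natDegree_translation_le (c : ℕ → ℚ) (P : Lam) :
    (translation c P).natDegree ≤ wbound P := by
  rw [translation, aeval_def, eval₂_eq]
  refine Polynomial.natDegree_sum_le_of_forall_le _ _ fun α hα => ?_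
  rw [← Algebra.smul_def]
  refine ((Polynomial.natDegree_smul_le _ _).trans ?_).trans
    (Finset.le_sup (f := fun α : ℕ+ →₀ ℕ => α.sum fun i k => (i : ℕ) * k) hα)
  refine (Polynomial.natDegree_prod_le _ _).trans (Finset.sum_le_sum fun i _ => ?_)
  have hlinear : (Polynomial.C (X i) - c i • Polynomial.X ^ (i : ℕ) : Lam[X]).natDegree ≤ i := by
    compute_degree!
  exact (Polynomial.natDegree_pow_le_of_le _ hlinear).trans_eq (mul_comm _ _)

/-! ### Determinants -/

section Determinants

variable {R S : Type*} [CommRing R] [CommRing S] [Algebra R S]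

theorem map_det_updateCol_map_algebraMap {n : Type*} [DecidableEq n] [Fintype n] (φ : S →ₗ[R] R)
    (A : Matrix n n R) (k : n) (v : n → S) :
    φ ((A.map (algebraMap R S)).updateCol k v).det = (A.updateCol k fun i => φ (v i)).det := by
  rw [← Matrix.cramer_apply, ← Matrix.cramer_apply, Matrix.cramer_eq_adjugate_mulVec,
    Matrix.cramer_eq_adjugate_mulVec, ← RingHom.mapMatrix_apply, ← RingHom.map_adjugate]
  simp only [Matrix.mulVec, dotProduct, RingHom.mapMatrix_apply, Matrix.map_apply,
    ← Algebra.smul_def, map_sum, map_smul, smul_eq_mul]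

theorem map_det_updateRow_map_algebraMap {n : Type*} [DecidableEq n] [Fintype n] (φ : S →ₗ[R] R)
    (A : Matrix n n R) (k : n) (v : n → S) :
    φ ((A.map (algebraMap R S)).updateRow k v).det = (A.updateRow k fun i => φ (v i)).det := by
  rw [← Matrix.det_transpose, ← Matrix.updateCol_transpose, ← Matrix.transpose_map,
    map_det_updateCol_map_algebraMap, Matrix.updateCol_transpose, Matrix.det_transpose]

theorem det_sub_mul_eq_det_cons_pow {l : ℕ} (x : R) (M : Fin l → Fin (l + 1) → R) :
    (Matrix.of fun i j => M i j.succ - x * M i j.castSucc).det =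
      (Matrix.of (Fin.cons (fun j => x ^ (j : ℕ)) M : Fin (l + 1) → Fin (l + 1) → R)).det := by
  let B : Matrix (Fin (l + 1)) (Fin (l + 1)) R :=
    Matrix.of (Fin.cons (Pi.single 0 1)
      fun i => Fin.cons (M i 0) fun j => M i j.succ - x * M i j.castSucc)
  have hcol : (Matrix.of
      (Fin.cons (fun j => x ^ (j : ℕ)) M : Fin (l + 1) → Fin (l + 1) → R)).det = B.det := by
    refine Matrix.det_eq_of_forall_col_eq_smul_add_pred (fun _ => x) (fun i => ?_) fun i j => ?_
    · cases i using Fin.cases <;> simp [B]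
    · cases i using Fin.cases <;> simp [B, pow_succ']
  rw [hcol, Matrix.det_succ_row_zero, Fin.sum_univ_succ, Finset.sum_eq_zero fun j _ => by simp [B],
    add_zero, Fin.succAbove_zero, Fin.val_zero, pow_zero, one_mul]
  exact (one_mul _).symm

theorem pow_mul_det_eq_det_snoc {m : ℕ} (x : R) (B : Matrix (Fin (m + 1)) (Fin (m + 1)) R) :
    x ^ m * B.det = (Matrix.of fun i =>
      (Fin.snoc (fun j => x * B i j.castSucc + B i j.succ) (B i (Fin.last m)) :
        Fin (m + 1) → R)).det := by
  let L : Matrix (Fin (m + 1)) (Fin (m + 1)) R :=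
    Matrix.of (Fin.snoc (fun j => Pi.single j.castSucc x + Pi.single j.succ 1)
      (Pi.single (Fin.last m) 1))
  have hL : L.det = x ^ m := by
    rw [Matrix.det_of_isUpperTriangular]
    · simp [L, Fin.prod_univ_castSucc, Fin.ext_iff]
    · intro i j hij
      cases i using Fin.lastCases with
      | last => simp [L, (show j < Fin.last m from hij).ne]
      | cast i =>
        have hj : (j : ℕ) < i := hij
        have h₁ : (j : ℕ) ≠ i := by omega
        have h₂ : (j : ℕ) ≠ i + 1 := by omega
        simp [L, Fin.ext_iff, h₁, h₂]
  rw [mul_comm, ← hL, ← Matrix.det_transpose L, ← Matrix.det_mul]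
  congr 1
  ext i j
  cases j using Fin.lastCases <;>
    simp [L, Matrix.mul_apply, Pi.single_apply, mul_add, Finset.sum_add_distrib, mul_comm x]

end Determinants

/-! ### Vertex operators -/

/-- The `Λ`-linear evaluation `z⁻ʲ ↦ g_{n+j}` of polynomials in `z⁻¹`, for the family
`g = genFam c`: it extracts the coefficient of `zⁿ` after multiplication by the series
`∑ g_k zᵏ`. -/
def umbralEval (c : ℕ → ℚ) (n : ℤ) : Lam[X] →ₗ[Lam] Lam :=
  Polynomial.lsum fun j => LinearMap.mulRight Lam (genFamZ c (n + j))

/-- The component of index `n` of the vertex operator `exp (∑ c_n b_{-n} zⁿ / n)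
exp (-∑ c_n b_n z⁻ⁿ / n)`, i.e. the coefficient of `zⁿ`. -/
def vertexOp (c : ℕ → ℚ) (n : ℤ) : Lam →ₗ[ℚ] Lam :=
  (umbralEval c n).restrictScalars ℚ ∘ₗ (translation c).toLinearMap

section VertexOp

variable (c : ℕ → ℚ)

theorem umbralEval_monomial (n : ℤ) (j : ℕ) (P : Lam) :
    umbralEval c n (Polynomial.monomial j P) = P * genFamZ c (n + j) := by
  simp [umbralEval, Polynomial.sum_monomial_index]

theorem umbralEval_X_pow (n : ℤ) (j : ℕ) :
    umbralEval c n (Polynomial.X ^ j) = genFamZ c (n + j) := by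
  rw [← Polynomial.monomial_one_right_eq_X_pow, umbralEval_monomial, one_mul]

theorem umbralEval_C (n : ℤ) (P : Lam) : umbralEval c n (Polynomial.C P) = P * genFamZ c n := by
  simpa using umbralEval_monomial c n 0 P

theorem umbralEval_X_pow_mul (n : ℤ) (j : ℕ) (Q : Lam[X]) :
    umbralEval c n (Polynomial.X ^ j * Q) = umbralEval c (n + j) Q := by
  induction Q using Polynomial.induction_on' with
  | add P Q hP hQ => rw [mul_add, map_add, map_add, hP, hQ]
  | monomial i P =>
    rw [Polynomial.X_pow_mul_monomial, umbralEval_monomial, umbralEval_monomial, Nat.cast_add,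
      add_assoc, add_comm (j : ℤ)]

theorem vertexOp_apply (n : ℤ) (P : Lam) : vertexOp c n P = umbralEval c n (translation c P) := rfl

theorem vertexOp_one (n : ℤ) : vertexOp c n 1 = genFamZ c n := by
  rw [vertexOp_apply, map_one, ← Polynomial.C_1, umbralEval_C, one_mul]

theorem vertexOp_eq_sum (n : ℤ) (P : Lam) :
    vertexOp c n P = ∑ j ∈ Finset.range (wbound P + 1),
      (-1 : ℚ) ^ j • (genFamZ c (n + j) * Dop (genFam (dualWeight c) j) P) := by
  rw [vertexOp_apply, Polynomial.as_sum_range' (translation c P) (wbound P + 1)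
    (Nat.lt_succ_of_le (natDegree_translation_le c P)), map_sum]
  refine Finset.sum_congr rfl fun j _ => ?_
  rw [umbralEval_monomial, coeff_translation, smul_mul_assoc, mul_comm]

end VertexOp

/-- The weights of the complete homogeneous functions. -/
def hWeight (_ : ℕ) : ℚ := 1

/-- The weights of the elementary functions. -/
def eWeight (n : ℕ) : ℚ := (-1) ^ (n + 1)

theorem hWeight_mul_self (n : ℕ) : hWeight n * hWeight n = 1 := mul_one 1

theorem eWeight_mul_self (n : ℕ) : eWeight n * eWeight n = 1 := by
  rw [eWeight, ← mul_pow, neg_one_mul, neg_neg, one_pow]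

theorem dualWeight_hWeight : dualWeight hWeight = eWeight := funext fun _ => mul_one _

theorem dualWeight_eWeight : dualWeight eWeight = hWeight := funext eWeight_mul_self

theorem Sop_eq_vertexOp (n : ℤ) : Sop n = vertexOp hWeight (-n) := by
  funext P
  rw [vertexOp_eq_sum, Sop, dualWeight_hWeight]
  refine Finset.sum_congr rfl fun j _ => ?_
  rw [neg_add_eq_sub]
  split_ifs with hj
  · rfl
  · rw [genFamZ_of_neg _ (by omega), zero_mul, smul_zero]

theorem SstarOp_eq_smul_vertexOp (n : ℤ) : SstarOp n = (-1 : ℚ) ^ n • ⇑(vertexOp eWeight n) := by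
  funext P
  rw [Pi.smul_apply, vertexOp_eq_sum, SstarOp, dualWeight_eWeight, Finset.smul_sum]
  refine Finset.sum_congr rfl fun j _ => ?_
  rw [smul_smul, ← zpow_natCast, ← zpow_add₀ (by norm_num), add_comm n]
  split_ifs with hj
  · rfl
  · rw [genFamZ_of_neg _ (by omega), zero_mul, smul_zero]

theorem foldr_Sop_ofFn_neg {m : ℕ} (f : Fin m → ℤ) (P : Lam) :
    (List.ofFn fun i => -f i).foldr Sop P = ((List.ofFn f).map (vertexOp hWeight)).prod P := by
  induction m with
  | zero => rfl
  | succ m ih =>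
    rw [List.ofFn_succ, List.foldr_cons, ih, Sop_eq_vertexOp, neg_neg, List.ofFn_succ,
      List.map_cons, List.prod_cons, Module.End.mul_apply]

theorem foldr_SstarOp (L : List ℤ) (P : Lam) :
    L.foldr SstarOp P = (-1 : ℚ) ^ L.sum • (L.map (vertexOp eWeight)).prod P := by
  induction L with
  | nil => exact (one_smul ℚ P).symm
  | cons n L ih =>
    rw [List.foldr_cons, ih, SstarOp_eq_smul_vertexOp, Pi.smul_apply, map_smul, smul_smul,
      List.sum_cons, zpow_add₀ (by norm_num), List.map_cons, List.prod_cons, Module.End.mul_apply]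

/-! ### Jacobi–Trudi determinants -/

/-- The Jacobi–Trudi matrix of the integer tuple `ρ` in the family `genFam c`. -/
def jacobiTrudiMatrix (c : ℕ → ℚ) {l : ℕ} (ρ : Fin l → ℤ) : Matrix (Fin l) (Fin l) Lam :=
  Matrix.of fun i j => genFamZ c (ρ i - (i : ℕ) + (j : ℕ))

/-- The Jacobi–Trudi determinant of `ρ` in the family `genFam c`; the common form of `schur` and
`schurE`. -/
def jacobiTrudi (c : ℕ → ℚ) {l : ℕ} (ρ : Fin l → ℤ) : Lam := (jacobiTrudiMatrix c ρ).det

section JacobiTrudi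

variable {c : ℕ → ℚ}

theorem jacobiTrudi_comp_cast (c : ℕ → ℚ) {l m : ℕ} (h : l = m) (ρ : Fin m → ℤ) :
    jacobiTrudi c (ρ ∘ Fin.cast h) = jacobiTrudi c ρ := by
  subst h
  rfl

theorem jacobiTrudi_of_isEmpty (c : ℕ → ℚ) (ρ : Fin 0 → ℤ) : jacobiTrudi c ρ = 1 :=
  Matrix.det_isEmpty

theorem jacobiTrudi_castSucc_of_last_eq_zero (c : ℕ → ℚ) {m : ℕ} (ρ : Fin (m + 1) → ℤ)
    (h : ρ (Fin.last m) = 0) : jacobiTrudi c (ρ ∘ Fin.castSucc) = jacobiTrudi c ρ := by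
  have hlast (j : Fin m) : jacobiTrudiMatrix c ρ (Fin.last m) j.castSucc = 0 := by
    rw [jacobiTrudiMatrix, Matrix.of_apply, h, Fin.val_last, Fin.val_castSucc]
    exact genFamZ_of_neg c (by omega)
  have hcorner : jacobiTrudiMatrix c ρ (Fin.last m) (Fin.last m) = 1 := by
    rw [jacobiTrudiMatrix, Matrix.of_apply, h, zero_sub, neg_add_cancel, genFamZ_zero]
  rw [jacobiTrudi, jacobiTrudi, Matrix.det_succ_row _ (Fin.last m), Fin.sum_univ_castSucc,
    Finset.sum_eq_zero fun j _ => by rw [hlast, mul_zero, zero_mul], hcorner, zero_add,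
    Even.neg_one_pow ⟨_, rfl⟩, one_mul, one_mul, Fin.succAbove_last]
  rfl

theorem vertexOp_jacobiTrudi (hc : ∀ n, c n * c n = 1) (n : ℤ) {l : ℕ} (ρ : Fin l → ℤ) :
    vertexOp c n (jacobiTrudi c ρ) = jacobiTrudi c (Fin.cons n ρ : Fin (l + 1) → ℤ) := by
  set A := jacobiTrudiMatrix c (Fin.cons n ρ : Fin (l + 1) → ℤ) with hA
  have htranslation : translation c (jacobiTrudi c ρ) =
      ((A.map (algebraMap Lam Lam[X])).updateRow 0 fun j => Polynomial.X ^ (j : ℕ)).det := by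
    rw [jacobiTrudi, AlgHom.map_det]
    convert det_sub_mul_eq_det_cons_pow (Polynomial.X : Lam[X])
      (fun i j => Polynomial.C (A i.succ j)) using 2
    · ext1 i j
      simp only [hA, jacobiTrudiMatrix, AlgHom.mapMatrix_apply, Matrix.map_apply, Matrix.of_apply,
        translation_genFamZ hc, Fin.cons_succ, Fin.val_succ, Fin.val_castSucc]
      push_cast
      ring_nf
    · ext1 i j
      cases i using Fin.cases <;> simp
  have hrow : (fun j : Fin (l + 1) => umbralEval c n (Polynomial.X ^ (j : ℕ))) = A 0 := by
    ext1 j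
    simp [hA, jacobiTrudiMatrix, umbralEval_X_pow]
  rw [vertexOp_apply, htranslation, map_det_updateRow_map_algebraMap, hrow,
    Matrix.updateRow_eq_self, jacobiTrudi]

theorem vertexOp_genFam_dualWeight_succ (hc : ∀ n, c n * c n = 1) (k : ℤ) (n : ℕ) :
    vertexOp c k (genFam (dualWeight c) (n + 1)) =
      genFamZ c k * genFam (dualWeight c) (n + 1) -
        vertexOp c (k + 1) (genFam (dualWeight c) n) := by
  rw [vertexOp_apply, ← genFamZ_natCast, translation_genFamZ_dualWeight hc, map_sub, umbralEval_C,
    ← pow_one Polynomial.X, umbralEval_X_pow_mul, Nat.cast_succ, add_sub_cancel_right,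
    genFamZ_natCast, vertexOp_apply, Nat.cast_one, mul_comm]

theorem vertexOp_genFam_dualWeight (hc : ∀ n, c n * c n = 1) (k : ℤ) (n : ℕ) :
    vertexOp c k (genFam (dualWeight c) n) = ∑ ij ∈ Finset.HasAntidiagonal.antidiagonal n,
      (-1) ^ ij.1 * genFamZ c (k + ij.1) * genFam (dualWeight c) ij.2 := by
  induction n generalizing k with
  | zero => simp [genFam_zero, vertexOp_one]
  | succ n ih =>
    rw [vertexOp_genFam_dualWeight_succ hc, ih, Finset.Nat.sum_antidiagonal_succ, sub_eq_add_neg,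
      ← Finset.sum_neg_distrib]
    simp [pow_succ, add_comm (1 : ℤ), add_assoc]

theorem vertexOp_zero_genFam_dualWeight_succ (hc : ∀ n, c n * c n = 1) (n : ℕ) :
    vertexOp c 0 (genFam (dualWeight c) (n + 1)) = 0 := by
  have h := congrArg (PowerSeries.coeff (n + 1))
    (rescale_neg_one_genSeries_mul_genSeries_dualWeight c)
  rw [vertexOp_genFam_dualWeight hc]
  simpa [PowerSeries.coeff_mul, PowerSeries.coeff_rescale, coeff_genSeries,
    PowerSeries.coeff_one] using h

theorem vertexOp_one_genFam_dualWeight (hc : ∀ n, c n * c n = 1) (n : ℕ) :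
    vertexOp c 1 (genFam (dualWeight c) n) = genFam (dualWeight c) (n + 1) := by
  have h := vertexOp_genFam_dualWeight_succ hc 0 n
  rw [vertexOp_zero_genFam_dualWeight_succ hc, genFamZ_zero, one_mul, zero_add] at h
  exact (sub_eq_zero.1 h.symm).symm

theorem X_pow_mul_translation_jacobiTrudi_dualWeight (hc : ∀ n, c n * c n = 1) {m : ℕ}
    (ρ : Fin (m + 1) → ℤ) :
    Polynomial.X ^ m * translation c (jacobiTrudi (dualWeight c) ρ) =
      (((jacobiTrudiMatrix (dualWeight c) fun i => ρ i + 1).map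
        (algebraMap Lam Lam[X])).updateCol (Fin.last m) fun i =>
          translation c (genFamZ (dualWeight c) (ρ i - (i : ℕ) + m))).det := by
  rw [jacobiTrudi, AlgHom.map_det, pow_mul_det_eq_det_snoc]
  congr 1
  ext1 i j
  cases j using Fin.lastCases with
  | last => simp [jacobiTrudiMatrix]
  | cast j =>
    have h := translation_genFamZ_dualWeight hc (ρ i - (i : ℕ) + j + 1)
    rw [add_sub_cancel_right, eq_sub_iff_add_eq'] at h
    rw [Matrix.updateCol_ne (Fin.castSucc_lt_last j).ne, Matrix.map_apply,
      Polynomial.algebraMap_eq]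
    convert h using 1
    · simp [jacobiTrudiMatrix, add_assoc]
    · rw [jacobiTrudiMatrix, Matrix.of_apply, Fin.val_castSucc]
      ring_nf

theorem vertexOp_jacobiTrudi_dualWeight (hc : ∀ n, c n * c n = 1) {n : ℕ} (ρ : Fin n → ℤ)
    (hρ : ∀ i, 0 ≤ ρ i) : vertexOp c n (jacobiTrudi (dualWeight c) ρ) =
      jacobiTrudi (dualWeight c) fun i => ρ i + 1 := by
  obtain _ | m := n
  · rw [jacobiTrudi_of_isEmpty, jacobiTrudi_of_isEmpty, vertexOp_one, Nat.cast_zero, genFamZ_zero]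
  have hcol : (fun i : Fin (m + 1) =>
      umbralEval c 1 (translation c (genFamZ (dualWeight c) (ρ i - (i : ℕ) + m)))) =
        fun i => jacobiTrudiMatrix (dualWeight c) (fun i => ρ i + 1) i (Fin.last m) := by
    ext1 i
    obtain ⟨x, hx⟩ := Int.eq_ofNat_of_zero_le (show 0 ≤ ρ i - (i : ℕ) + m by grind)
    rw [hx, genFamZ_natCast, ← vertexOp_apply, vertexOp_one_genFam_dualWeight hc,
      jacobiTrudiMatrix, Matrix.of_apply, Fin.val_last, ← genFamZ_natCast, Nat.cast_succ, ← hx]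
    ring_nf
  have hindex : umbralEval c (m + 1 : ℕ) (translation c (jacobiTrudi (dualWeight c) ρ)) =
      umbralEval c 1 (Polynomial.X ^ m * translation c (jacobiTrudi (dualWeight c) ρ)) := by
    rw [umbralEval_X_pow_mul, Nat.cast_succ, add_comm]
  rw [vertexOp_apply, hindex, X_pow_mul_translation_jacobiTrudi_dualWeight hc,
    map_det_updateCol_map_algebraMap, hcol, Matrix.updateCol_eq_self, jacobiTrudi]

end JacobiTrudi

/-! ### Products of vertex operators -/

/-- The conjugate of the partition `nu`, as a tuple of prescribed length `N`; when `N` exceeds the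
largest part, it is padded with zeros. -/
def conjTuple {k : ℕ} (nu : Fin k → ℕ) (N : ℕ) : Fin N → ℤ :=
  fun i => ((Finset.univ.filter fun j : Fin k => i.1 + 1 ≤ nu j).card : ℤ)

theorem conjTuple_succ {k : ℕ} (nu : Fin (k + 1) → ℕ) :
    conjTuple nu (nu 0) = fun i => conjTuple (fun j => nu j.succ) (nu 0) i + 1 := by
  ext1 i
  rw [conjTuple, Fin.card_filter_univ_succ, if_pos (Nat.succ_le_of_lt i.isLt),
    Nat.cast_add, Nat.cast_one]
  rfl

theorem jacobiTrudi_conjTuple_of_le (c : ℕ → ℚ) {k : ℕ} (nu : Fin k → ℕ) {M N : ℕ} (hMN : M ≤ N)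
    (h : ∀ j, nu j ≤ M) : jacobiTrudi c (conjTuple nu N) = jacobiTrudi c (conjTuple nu M) := by
  induction N, hMN using Nat.le_induction with
  | base => rfl
  | succ N hMN ih =>
    rw [← ih, ← jacobiTrudi_castSucc_of_last_eq_zero]
    · rfl
    · rw [conjTuple, Nat.cast_eq_zero, Finset.card_eq_zero, Fin.val_last]
      exact Finset.filter_eq_empty_iff.2 fun j _ => by grind

theorem prod_vertexOp_one {c : ℕ → ℚ} (hc : ∀ n, c n * c n = 1) {k : ℕ} {nu : Fin k → ℕ}
    (hnu : Antitone nu) {N : ℕ} (hN : ∀ j, nu j ≤ N) :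
    ((List.ofFn fun j => (nu j : ℤ)).map (vertexOp c)).prod 1 =
      jacobiTrudi (dualWeight c) (conjTuple nu N) := by
  induction k generalizing N with
  | zero =>
    rw [jacobiTrudi_conjTuple_of_le _ nu N.zero_le fun j => j.elim0, jacobiTrudi_of_isEmpty]
    rfl
  | succ k ih =>
    have hle (j : Fin (k + 1)) : nu j ≤ nu 0 := hnu (Fin.zero_le j)
    have htail := ih (hnu.comp_monotone (Fin.strictMono_succ).monotone) fun j => hle j.succ
    rw [jacobiTrudi_conjTuple_of_le _ nu (hN 0) hle, conjTuple_succ,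
      ← vertexOp_jacobiTrudi_dualWeight hc (conjTuple (fun j => nu j.succ) (nu 0))
        fun i => Int.natCast_nonneg _, List.ofFn_succ, List.map_cons,
      List.prod_cons, Module.End.mul_apply]
    exact congrArg _ htail

theorem prod_vertexOp_jacobiTrudi {c : ℕ → ℚ} (hc : ∀ n, c n * c n = 1) {l m : ℕ}
    (mu : Fin l → ℤ) (ρ : Fin m → ℤ) :
    ((List.ofFn mu).map (vertexOp c)).prod (jacobiTrudi c ρ) =
      jacobiTrudi c (Fin.append mu ρ) := by
  induction l with
  | zero =>
    rw [Fin.append_left_nil _ _ rfl, jacobiTrudi_comp_cast]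
    rfl
  | succ l ih =>
    rw [List.ofFn_succ, List.map_cons, List.prod_cons, Module.End.mul_apply, ih,
      vertexOp_jacobiTrudi hc, ← jacobiTrudi_comp_cast c (Nat.succ_add l m), ← Fin.append_cons]
    exact congrArg (fun μ => jacobiTrudi c (Fin.append μ ρ)) (Fin.cons_self_tail mu)

theorem mixed_vertex_products_general {l k : ℕ} (mu : Fin l → ℤ) {nu : Fin k → ℕ}
    (hnu : Antitone nu) {N : ℕ} (hN : ∀ j, nu j ≤ N) :
    (List.ofFn fun i => -mu i).foldr Sop ((List.ofFn fun j => (nu j : ℤ)).foldr SstarOp 1) =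
        (-1 : ℚ) ^ (∑ j, nu j) • schur (Fin.append mu (conjTuple nu N)) ∧
      (List.ofFn mu).foldr SstarOp ((List.ofFn fun j => -(nu j : ℤ)).foldr Sop 1) =
        (-1 : ℚ) ^ (∑ i, mu i) • schurE (Fin.append mu (conjTuple nu N)) := by
  constructor
  · have hsum : (List.ofFn fun j => (nu j : ℤ)).sum = (∑ j, nu j : ℕ) := by
      rw [List.sum_ofFn, Nat.cast_sum]
    rw [foldr_SstarOp, prod_vertexOp_one eWeight_mul_self hnu hN, dualWeight_eWeight, hsum,
      zpow_natCast, foldr_Sop_ofFn_neg, map_smul, prod_vertexOp_jacobiTrudi hWeight_mul_self]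
    rfl
  · rw [foldr_Sop_ofFn_neg, prod_vertexOp_one hWeight_mul_self hnu hN, dualWeight_hWeight,
      foldr_SstarOp, prod_vertexOp_jacobiTrudi eWeight_mul_self, List.sum_ofFn]
    rfl

/-- mixed products of vertex operators and dual vertex operators on the
vacuum are signed Schur functions of juxtaposed tuples: for partitions
`μ = (μ₁,…,μ_l)` and `ν = (ν₁,…,ν_k)`, with `ν'` the conjugate partition of `ν` and
`(μ,ν')` the juxtaposed integer tuple of length `l + ν₁`:
`S_{−μ₁} ⋯ S_{−μ_l} S*_{ν₁} ⋯ S*_{ν_k} (1) = (−1)^{|ν|} s_{(μ,ν')}` and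
`S*_{μ₁} ⋯ S*_{μ_l} S_{−ν₁} ⋯ S_{−ν_k} (1) = (−1)^{|μ|} s_{(μ,ν')'}`. -/
theorem mixed_vertex_products (l k : ℕ) (mu : Fin l → ℕ) (nu : Fin k → ℕ)
    (hmu : Antitone mu) (hnu : Antitone nu) :
    ((List.ofFn fun i => -(mu i : ℤ)).foldr Sop
        ((List.ofFn fun i => (nu i : ℤ)).foldr SstarOp 1)
      = ((-1 : ℚ)) ^ (∑ i, nu i) •
        schur (Fin.append (fun i => (mu i : ℤ))
          (fun i : Fin (if h : 0 < k then nu ⟨0, h⟩ else 0) =>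
            ((Finset.univ.filter fun j : Fin k => i.1 + 1 ≤ nu j).card : ℤ)))) ∧
    ((List.ofFn fun i => (mu i : ℤ)).foldr SstarOp
        ((List.ofFn fun i => -(nu i : ℤ)).foldr Sop 1)
      = ((-1 : ℚ)) ^ (∑ i, mu i) •
        schurE (Fin.append (fun i => (mu i : ℤ))
          (fun i : Fin (if h : 0 < k then nu ⟨0, h⟩ else 0) =>
            ((Finset.univ.filter fun j : Fin k => i.1 + 1 ≤ nu j).card : ℤ)))) := by
  have hN (j : Fin k) : nu j ≤ if h : 0 < k then nu ⟨0, h⟩ else 0 := by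
    rw [dif_pos j.pos]
    exact hnu (Fin.mk_le_of_le_val (Nat.zero_le _))
  exact_mod_cast mixed_vertex_products_general (fun i => (mu i : ℤ)) hnu hN
end
end

section
/- Let k ≥ 1 and expand the polynomial P := ∏_{1≤i<j≤k}(z_i − q·z_j) = ∑_γ a_γ(q)·z^γ in ℤ[q][z₁,…,z_k]. Then: (i) for every permutation w ∈ S_k, the coefficient of z^{w(δ)} is a_{w(δ)}(q) = (−q)^{ℓ(w)}; (ii) every exponent tuple γ with a_γ ≠ 0 that is not of the form w(δ) for some w ∈ S_k has two equal coordinates, and its coefficient satisfies a_γ(1) = 0. -/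
/-!
Renaming the variables along `w` turns `z^{w(δ)}` into `z^δ`, where `δ` is the sum over the pairs
`i < j` of the lexicographically larger of the two exponents of `z_{w i} - q z_{w j}`. Hence `z^δ`
is the leading monomial of the renamed product and its coefficient is the product of the
coefficients picked from the factors: `1` if `w i < w j`, and `-q` if `(i, j)` is an inversion.

Each variable occurs in exactly `k - 1` of the factors, so the coordinates of an exponent with
nonzero coefficient lie in `{0, …, k - 1}`; if they are pairwise distinct, they rearrange `δ`.
Modulo `q - 1` the product is the Vandermonde determinant, whose Leibniz expansion contains the
monomials `z^{w(δ)}` only, so every other coefficient is divisible by `q - 1`.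
-/

open MvPolynomial

noncomputable section

/-- The number of inversions of a permutation `w` of `Fin k`. -/
def inversions {k : ℕ} (w : Equiv.Perm (Fin k)) : ℕ :=
  (Finset.univ.filter fun p : Fin k × Fin k => p.1 < p.2 ∧ w p.2 < w p.1).card

@[to_additive]
lemma prod_lt_eq_prod_prod_Ioi {ι M : Type*} [CommMonoid M] [Fintype ι] [Preorder ι]
    [DecidableLT ι] [LocallyFiniteOrderTop ι] (f : ι → ι → M) :
    ∏ p : ι × ι with p.1 < p.2, f p.1 p.2 = ∏ i, ∏ j ∈ Finset.Ioi i, f i j := by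
  simp only [Finset.prod_filter, Fintype.prod_prod_type, ← Finset.filter_lt_eq_Ioi]

lemma sum_lt_comp_perm {ι M : Type*} [AddCommMonoid M] [Fintype ι] [LinearOrder ι]
    (f : Sym2 ι → M) (w : Equiv.Perm ι) :
    ∑ p : ι × ι with p.1 < p.2, f s(w p.1, w p.2) = ∑ p : ι × ι with p.1 < p.2, f s(p.1, p.2) := by
  have sum_lt_eq (g : Sym2 ι → M) :
      ∑ p : ι × ι with p.1 < p.2, g s(p.1, p.2) = ∑ z with ¬ z.IsDiag, g z := by
    rw [← Finset.sym2_univ, Finset.sum_sym2_filter_not_isDiag]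
    congr 1
    ext p
    simpa using ne_of_lt
  have map_bijective : Function.Bijective (Sym2.map w) :=
    Finite.injective_iff_bijective.mp (Sym2.map.injective w.injective)
  calc ∑ p : ι × ι with p.1 < p.2, f s(w p.1, w p.2)
      = ∑ z : Sym2 ι with ¬ z.IsDiag, f (z.map w) := sum_lt_eq fun z => f (z.map w)
    _ = ∑ z : Sym2 ι with ¬ z.IsDiag, f z :=
        Finset.sum_bijective _ map_bijective
          (fun z => by simp [Sym2.isDiag_map w.injective]) fun _ _ => rfl
    _ = ∑ p : ι × ι with p.1 < p.2, f s(p.1, p.2) := (sum_lt_eq f).symm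

lemma coeff_prod_sum_of_degree_le {σ R ι : Type*} [CommSemiring R] (m : MonomialOrder σ)
    (s : Finset ι) (f : ι → MvPolynomial σ R) (d : ι → σ →₀ ℕ)
    (h : ∀ i ∈ s, m.toSyn (m.degree (f i)) ≤ m.toSyn (d i)) :
    (∏ i ∈ s, f i).coeff (∑ i ∈ s, d i) = ∏ i ∈ s, (f i).coeff (d i) := by
  classical
  induction s using Finset.induction_on with
  | empty => simp
  | insert a s ha ih =>
    rw [Finset.forall_mem_insert] at h
    have hs : m.toSyn (m.degree (∏ i ∈ s, f i)) ≤ m.toSyn (∑ i ∈ s, d i) := by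
      refine m.degree_prod_le.trans ?_
      simpa only [map_sum] using Finset.sum_le_sum h.2
    rw [Finset.prod_insert ha, Finset.sum_insert ha, Finset.prod_insert ha,
      m.coeff_mul_of_add_of_degree_le h.1 hs, ih h.2]

section BinomialFactors

variable {σ R : Type*} [CommRing R]

lemma coeff_single_min_X_sub_C_mul_X [LinearOrder σ] (q : R) {a b : σ} (hab : a ≠ b) :
    (X a - C q * X b).coeff (Finsupp.single (min a b) 1) = if b < a then -q else 1 := by
  rcases hab.lt_or_gt with h | h
  · simp [coeff_X, Finsupp.single_left_inj, h.le, h.not_gt, h.ne']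
  · simp [coeff_X, Finsupp.single_left_inj, h.le, h, h.ne']

lemma lex_degree_X_sub_C_mul_X_le [LinearOrder σ] [WellFoundedGT σ] (q : R) (a b : σ) :
    MonomialOrder.lex.toSyn (MonomialOrder.lex.degree (X a - C q * X b))
      ≤ MonomialOrder.lex.toSyn (Finsupp.single (min a b) 1) := by
  have single_le {c : σ} (hc : min a b ≤ c) :
      MonomialOrder.lex.toSyn (Finsupp.single c 1)
        ≤ MonomialOrder.lex.toSyn (Finsupp.single (min a b) 1) := by
    rw [MonomialOrder.lex_le_iff]
    exact Finsupp.Lex.single_le_iff.mpr hc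
  refine MonomialOrder.degree_sub_le.trans (sup_le ?_ ?_)
  · exact MonomialOrder.degree_X_le_single.trans (single_le (min_le_left a b))
  · rw [C_mul_X_eq_monomial]
    exact (MonomialOrder.degree_monomial_le q).trans (single_le (min_le_right a b))

lemma degreeOf_X_sub_C_mul_X_le [DecidableEq σ] (q : R) (a b i : σ) :
    degreeOf i (X a - C q * X b) ≤ (if a = i then 1 else 0) + if b = i then 1 else 0 := by
  cases subsingleton_or_nontrivial R
  · simp [Subsingleton.elim (X a - C q * X b) (0 : MvPolynomial σ R)]
  calc degreeOf i (X a - C q * X b)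
      ≤ max (degreeOf i (X a : MvPolynomial σ R)) (degreeOf i (X b : MvPolynomial σ R)) :=
        (degreeOf_sub_le i _ _).trans (max_le_max_left _ (degreeOf_C_mul_le _ i q))
    _ ≤ degreeOf i (X a : MvPolynomial σ R) + degreeOf i (X b : MvPolynomial σ R) :=
        max_le_add_of_nonneg (Nat.zero_le _) (Nat.zero_le _)
    _ = (if a = i then 1 else 0) + if b = i then 1 else 0 := by
        simp only [degreeOf_X, eq_comm]

end BinomialFactors

/-- The polynomial `∏_{i<j} (z_i - q z_j)` for an element `q` of an arbitrary commutative ring. -/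
def qVandermonde (k : ℕ) {R : Type*} [CommRing R] (q : R) : MvPolynomial (Fin k) R :=
  ∏ p : Fin k × Fin k with p.1 < p.2, (X p.1 - C q * X p.2)

/-- The exponent `w(δ)`, with the convention that `w` acts on `δ = (k - 1, …, 1, 0)` by
`w(δ)_i = δ_{w i}`. -/
def permDelta {k : ℕ} (w : Equiv.Perm (Fin k)) : Fin k →₀ ℕ :=
  Finsupp.equivFunOnFinite.symm fun i => k - 1 - (w i).1

section QVandermonde

variable {k : ℕ} {R : Type*} [CommRing R]

lemma permDelta_apply (w : Equiv.Perm (Fin k)) (i : Fin k) : permDelta w i = (w i).rev := by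
  simp only [permDelta, Finsupp.equivFunOnFinite_symm_apply_apply, Fin.val_rev]
  omega

lemma permDelta_eq_card_Ioi (w : Equiv.Perm (Fin k)) (i : Fin k) :
    permDelta w i = (Finset.Ioi (w i)).card :=
  (Fin.card_Ioi (w i)).symm

lemma mapDomain_permDelta (w : Equiv.Perm (Fin k)) :
    (permDelta w).mapDomain w
      = ∑ p : Fin k × Fin k with p.1 < p.2, Finsupp.single (min (w p.1) (w p.2)) 1 := by
  calc (permDelta w).mapDomain w
      = ∑ i, ∑ _j ∈ Finset.Ioi i, Finsupp.single i 1 := by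
        ext a
        rw [Finsupp.mapDomain_equiv_apply, permDelta_eq_card_Ioi]
        simp [-Fin.card_Ioi, Finsupp.single_apply]
    _ = ∑ p : Fin k × Fin k with p.1 < p.2, Finsupp.single (min p.1 p.2) 1 := by
        rw [← sum_lt_eq_sum_sum_Ioi]
        refine Finset.sum_congr rfl fun p hp => ?_
        rw [min_eq_left (Finset.mem_filter.mp hp).2.le]
    _ = ∑ p : Fin k × Fin k with p.1 < p.2, Finsupp.single (min (w p.1) (w p.2)) 1 :=
        (sum_lt_comp_perm (fun z => Finsupp.single z.inf 1) w).symm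

lemma coeff_permDelta_qVandermonde (q : R) (w : Equiv.Perm (Fin k)) :
    (qVandermonde k q).coeff (permDelta w) = (-q) ^ inversions w := by
  have rename_eq : rename w (qVandermonde k q)
      = ∏ p : Fin k × Fin k with p.1 < p.2, (X (w p.1) - C q * X (w p.2)) := by
    simp [qVandermonde]
  calc (qVandermonde k q).coeff (permDelta w)
      = (rename w (qVandermonde k q)).coeff ((permDelta w).mapDomain w) :=
        (coeff_rename_mapDomain w w.injective _ _).symm
    _ = ∏ p : Fin k × Fin k with p.1 < p.2,
          (X (w p.1) - C q * X (w p.2)).coeff (Finsupp.single (min (w p.1) (w p.2)) 1) := by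
        rw [rename_eq, mapDomain_permDelta]
        exact coeff_prod_sum_of_degree_le .lex _ _ _ fun p _ =>
          lex_degree_X_sub_C_mul_X_le q (w p.1) (w p.2)
    _ = ∏ p : Fin k × Fin k with p.1 < p.2, if w p.2 < w p.1 then -q else 1 :=
        Finset.prod_congr rfl fun p hp =>
          coeff_single_min_X_sub_C_mul_X q (w.injective.ne (Finset.mem_filter.mp hp).2.ne)
    _ = (-q) ^ inversions w := by
        rw [← Finset.prod_filter, Finset.prod_const, Finset.filter_filter, inversions]

lemma degreeOf_qVandermonde_le (q : R) (i : Fin k) : degreeOf i (qVandermonde k q) ≤ k - 1 := by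
  calc degreeOf i (qVandermonde k q)
      ≤ ∑ p : Fin k × Fin k with p.1 < p.2,
          ((if p.1 = i then 1 else 0) + if p.2 = i then 1 else 0) :=
        (degreeOf_prod_le _ _ _).trans
          (Finset.sum_le_sum fun p _ => degreeOf_X_sub_C_mul_X_le q p.1 p.2 i)
    _ = (Finset.Ioi i).card + (Finset.Iio i).card := by
        rw [sum_lt_eq_sum_sum_Ioi fun a b => (if a = i then 1 else 0) + if b = i then 1 else 0]
        simp [Finset.sum_add_distrib, ← Finset.filter_gt_eq_Iio]
    _ = k - 1 := by
        rw [Fin.card_Ioi, Fin.card_Iio]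
        omega

lemma exists_eq_permDelta {γ : Fin k →₀ ℕ} (hinj : Function.Injective γ) (hlt : ∀ i, γ i < k) :
    ∃ w, γ = permDelta w := by
  let position (i : Fin k) : Fin k := Fin.rev ⟨γ i, hlt i⟩
  have position_injective : Function.Injective position := fun a b hab =>
    hinj (Fin.mk.inj (Fin.rev_injective hab))
  refine ⟨.ofBijective position (Finite.injective_iff_bijective.mp position_injective), ?_⟩
  ext i
  simp [permDelta_apply, position]

lemma exists_ne_eq_of_coeff_qVandermonde_ne_zero (q : R) {γ : Fin k →₀ ℕ}
    (hγ : (qVandermonde k q).coeff γ ≠ 0) (hperm : ∀ w, γ ≠ permDelta w) :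
    ∃ i j, i ≠ j ∧ γ i = γ j := by
  have hlt (i : Fin k) : γ i < k := by
    have := degreeOf_le_iff.mp (degreeOf_qVandermonde_le q i) γ (mem_support_iff.mpr hγ)
    have := i.pos
    omega
  by_contra! hne
  have hinj : Function.Injective γ := fun i j => not_imp_not.mp (hne i j)
  obtain ⟨w, hw⟩ := exists_eq_permDelta hinj hlt
  exact hperm w hw

lemma map_qVandermonde {S : Type*} [CommRing S] (φ : R →+* S) (q : R) :
    map φ (qVandermonde k q) = qVandermonde k (φ q) := by
  simp [qVandermonde]

lemma qVandermonde_one :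
    qVandermonde k (1 : R)
      = ∑ w : Equiv.Perm (Fin k), Equiv.Perm.sign w • monomial (permDelta w) 1 := by
  calc qVandermonde k (1 : R)
      = (Matrix.projVandermonde 1 (X : Fin k → MvPolynomial (Fin k) R)).det := by
        simp only [qVandermonde, Matrix.det_projVandermonde, map_one, one_mul, Pi.one_apply]
        exact prod_lt_eq_prod_prod_Ioi fun i j => (X i - X j : MvPolynomial (Fin k) R)
    _ = ∑ w : Equiv.Perm (Fin k), Equiv.Perm.sign w • monomial (permDelta w) 1 := by
        rw [← Matrix.det_transpose, Matrix.det_apply]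
        refine Finset.sum_congr rfl fun w _ => ?_
        congr 1
        rw [monomial_eq, C_1, one_mul, Finsupp.prod_fintype _ _ fun i => pow_zero _]
        simp [Matrix.projVandermonde_apply, permDelta_apply]

lemma coeff_qVandermonde_one_eq_zero {γ : Fin k →₀ ℕ} (hperm : ∀ w, γ ≠ permDelta w) :
    (qVandermonde k (1 : R)).coeff γ = 0 := by
  classical
  rw [qVandermonde_one, coeff_sum]
  refine Finset.sum_eq_zero fun w _ => ?_
  rw [Units.smul_def, coeff_smul, coeff_monomial, if_neg (hperm w).symm, smul_zero]

lemma sub_one_dvd_coeff_qVandermonde (q : R) {γ : Fin k →₀ ℕ} (hperm : ∀ w, γ ≠ permDelta w) :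
    q - 1 ∣ (qVandermonde k q).coeff γ := by
  let φ := Ideal.Quotient.mk (Ideal.span {q - 1})
  have hq : φ q = 1 := by
    rw [← map_one φ, Ideal.Quotient.mk_eq_mk_iff_sub_mem]
    exact Ideal.mem_span_singleton_self (q - 1)
  rw [← Ideal.mem_span_singleton, ← Ideal.Quotient.eq_zero_iff_mem]
  change φ _ = 0
  rw [← coeff_map, map_qVandermonde, hq, coeff_qVandermonde_one_eq_zero hperm]

end QVandermonde

theorem q_vandermonde_expansion_general (k : ℕ) {R : Type*} [CommRing R] (q : R) :
    (∀ w : Equiv.Perm (Fin k), (qVandermonde k q).coeff (permDelta w) = (-q) ^ inversions w) ∧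
    (∀ γ : Fin k →₀ ℕ, (qVandermonde k q).coeff γ ≠ 0 → (∀ w, γ ≠ permDelta w) →
      (∃ i j, i ≠ j ∧ γ i = γ j) ∧ q - 1 ∣ (qVandermonde k q).coeff γ) :=
  ⟨coeff_permDelta_qVandermonde q, fun _ hγ hperm =>
    ⟨exists_ne_eq_of_coeff_qVandermonde_ne_zero q hγ hperm,
      sub_one_dvd_coeff_qVandermonde q hperm⟩⟩

/-- expand `P := ∏_{1≤i<j≤k} (z_i − q·z_j) = ∑_γ a_γ(q)·z^γ` in
`ℤ[q][z₁,…,z_k]`, and let `δ := (k−1, k−2, …, 1, 0)`.  Then: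
(i) for every `w ∈ S_k`, the coefficient of `z^{w(δ)}` is `a_{w(δ)}(q) = (−q)^{ℓ(w)}`;
(ii) every exponent tuple `γ` with `a_γ ≠ 0` that is not of the form `w(δ)` has two
equal coordinates, and its coefficient satisfies `a_γ(1) = 0`. -/
theorem q_vandermonde_expansion (k : ℕ) (hk : 1 ≤ k) :
    let P : MvPolynomial (Fin k) (Polynomial ℤ) :=
      ∏ p ∈ Finset.univ.filter (fun p : Fin k × Fin k => p.1 < p.2),
        (X p.1 - MvPolynomial.C Polynomial.X * X p.2)
    (∀ w : Equiv.Perm (Fin k),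
      P.coeff (Finsupp.equivFunOnFinite.symm fun i : Fin k => k - 1 - (w i).1)
        = (-Polynomial.X) ^ inversions w) ∧
    (∀ γ : Fin k → ℕ,
      P.coeff (Finsupp.equivFunOnFinite.symm γ) ≠ 0 →
      (∀ w : Equiv.Perm (Fin k), γ ≠ fun i => k - 1 - (w i).1) →
      (∃ i j : Fin k, i ≠ j ∧ γ i = γ j) ∧
        Polynomial.eval 1 (P.coeff (Finsupp.equivFunOnFinite.symm γ)) = 0) := by
  intro P
  obtain ⟨coeff_perm, coeff_other⟩ :=
    q_vandermonde_expansion_general k (Polynomial.X : Polynomial ℤ)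
  refine ⟨coeff_perm, fun γ hγ hperm => ?_⟩
  obtain ⟨hrep, hdvd⟩ := coeff_other (Finsupp.equivFunOnFinite.symm γ) hγ fun w =>
    Finsupp.equivFunOnFinite.symm.injective.ne (hperm w)
  rw [← Polynomial.C_1, Polynomial.dvd_iff_isRoot] at hdvd
  exact ⟨hrep, hdvd⟩
end
end
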